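/- arXiv:2108.09767 — 8 statements merged into one kernel-verified Lean document; each statement's English description precedes it below -/
import Mathlib

section
/- Under the Frank–Wolfe setup, suppose in addition that every step size satisfies |L·D²·η_t − ∇f(x_{t−1})ᵀ(z_t − x_{t−1})| ≤ ε for some ε ≥ 0, and let x̄ = x_{t′−1} where t′ ∈ argmin_{1≤t≤T} η_t. Then max_{u∈K₂} ∇f(x̄)ᵀ(u − x̄) ≤ √(2·H·L·D²/T) + 3ε + ε₀. -/
/-!
Write `A = L D²`, `g_t = ⟪∇f(x_{t-1}), z_t - x_{t-1}⟫` and `a = A · min η`. Smoothness along the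
segment from `x_{t-1}` to `z_t` together with `g_t ≥ A η_t - ε` gives the ascent inequality
`f(x_t) - f(x_{t-1}) ≥ η_t g_t - A η_t² / 2 ≥ η_t (A η_t - 2ε) / 2`.
If `a > 2ε`, the right-hand side is at least its value at the minimal step, so summing over `t` and
using `0 ≤ f ≤ H` yields `a (a - 2ε) ≤ 2HA/T`, hence `(a - 2ε)² ≤ 2HA/T`. In all cases
`a ≤ √(2HA/T) + 2ε`, so `g_{t'} ≤ a + ε ≤ √(2HA/T) + 3ε`, and the oracle guarantee costs a
further `ε₀`.
-/

open scoped RealInnerProductSpace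

/-- **Frank–Wolfe, non-convex case (Theorem: local optimality of the min-step iterate).**
Under the Frank–Wolfe setup (a compact convex set `K` of `p`-diameter at most `D`, an
`L`-smooth (w.r.t. the seminorm `p`) and `H`-bounded differentiable objective `f`, an
`(ε₀, K₂)`-approximate linear optimization oracle `O`, and iterates
`z t = O (∇f (x (t-1)))`, `x t = (1 - η t) • x (t-1) + η t • z t`), if moreover every
step size satisfies `|L·D²·η t − ⟪∇f(x (t-1)), z t − x (t-1)⟫| ≤ ε`, and `t'` is the
index of the smallest step size, then for `x̄ = x (t' - 1)`,
`max_{u ∈ K₂} ⟪∇f(x̄), u − x̄⟫ ≤ √(2·H·L·D²/T) + 3ε + ε₀`. -/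
theorem frank_wolfe_nonconvex {d : ℕ} (K K₂ : Set (EuclideanSpace ℝ (Fin d)))
    (hKconv : Convex ℝ K) (hKcomp : IsCompact K) (hK₂sub : K₂ ⊆ K) (hK₂ne : K₂.Nonempty)
    (p : Seminorm ℝ (EuclideanSpace ℝ (Fin d))) (D L H ε₀ ε : ℝ)
    (hD : 0 < D) (hL : 0 < L) (hH : 0 ≤ H) (hε₀ : 0 ≤ ε₀) (hε : 0 ≤ ε)
    (hdiam : ∀ x ∈ K, ∀ y ∈ K, p (x - y) ≤ D)
    (f : EuclideanSpace ℝ (Fin d) → ℝ)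
    (hdiff : ∀ x ∈ K, DifferentiableAt ℝ f x)
    (hsmooth : ∀ x ∈ K, ∀ y ∈ K,
      |f y - f x - ⟪gradient f x, y - x⟫| ≤ L / 2 * (p (x - y)) ^ 2)
    (hbound : ∀ x ∈ K, f x ∈ Set.Icc (0 : ℝ) H)
    (O : EuclideanSpace ℝ (Fin d) → EuclideanSpace ℝ (Fin d))
    (hOmem : ∀ v, O v ∈ K)
    (horacle : ∀ v, ∀ u ∈ K₂, ⟪v, u⟫ - ε₀ ≤ ⟪v, O v⟫)
    (T : ℕ) (hT : 1 ≤ T)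
    (η : ℕ → ℝ) (x z : ℕ → EuclideanSpace ℝ (Fin d))
    (hx0 : x 0 ∈ K)
    (hη : ∀ t, 1 ≤ t → t ≤ T → η t ∈ Set.Icc (0 : ℝ) 1)
    (hz : ∀ t, 1 ≤ t → t ≤ T → z t = O (gradient f (x (t - 1))))
    (hx : ∀ t, 1 ≤ t → t ≤ T → x t = (1 - η t) • x (t - 1) + η t • z t)
    (hstep : ∀ t, 1 ≤ t → t ≤ T →
      |L * D ^ 2 * η t - ⟪gradient f (x (t - 1)), z t - x (t - 1)⟫| ≤ ε)
    (t' : ℕ) (ht'1 : 1 ≤ t') (ht'T : t' ≤ T)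
    (ht'min : ∀ t, 1 ≤ t → t ≤ T → η t' ≤ η t) :
    ∀ u ∈ K₂, ⟪gradient f (x (t' - 1)), u - x (t' - 1)⟫ ≤
      Real.sqrt (2 * H * L * D ^ 2 / T) + 3 * ε + ε₀ := by
  intro u hu
  have hA : 0 < L * D ^ 2 := by positivity
  have hTpos : (0 : ℝ) < T := by exact_mod_cast hT
  have hxK : ∀ t, t ≤ T → x t ∈ K := by
    intro t
    induction t with
    | zero => intro _; exact hx0
    | succ n ih =>
      intro hn
      have h1 := hη (n + 1) (by omega) hn
      rw [hx (n + 1) (by omega) hn, hz (n + 1) (by omega) hn]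
      exact hKconv (ih (by omega)) (hOmem _) (by linarith [h1.2]) h1.1 (by ring)
  have hascent : ∀ n, n + 1 ≤ T →
      η (n + 1) * (L * D ^ 2 * η (n + 1) - 2 * ε) / 2 ≤ f (x (n + 1)) - f (x n) := by
    intro n hn
    have hη1 := hη (n + 1) (by omega) hn
    have hzK : z (n + 1) ∈ K := by
      rw [hz (n + 1) (by omega) hn]
      exact hOmem _
    have hxn := hxK n (by omega)
    have hs := (abs_le.1 (hsmooth _ hxn _ (hxK (n + 1) hn))).1
    have hst := (abs_le.1 (hstep (n + 1) (by omega) hn)).2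
    have hxs := hx (n + 1) (by omega) hn
    simp only [Nat.add_sub_cancel] at hst hxs
    have hd : x (n + 1) - x n = η (n + 1) • (z (n + 1) - x n) := by
      rw [hxs]
      module
    have hd' : x n - x (n + 1) = η (n + 1) • (x n - z (n + 1)) := by
      rw [hxs]
      module
    have hp : p (x n - x (n + 1)) = η (n + 1) * p (x n - z (n + 1)) := by
      rw [hd', map_smul_eq_mul, Real.norm_of_nonneg hη1.1]
    have hp2 : p (x n - x (n + 1)) ^ 2 ≤ (η (n + 1) * D) ^ 2 := by
      rw [hp]
      exact pow_le_pow_left₀ (mul_nonneg hη1.1 (apply_nonneg p _))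
        (mul_le_mul_of_nonneg_left (hdiam _ hxn _ hzK) hη1.1) 2
    have hp3 := mul_le_mul_of_nonneg_left hp2 (by positivity : 0 ≤ L / 2)
    rw [hd, real_inner_smul_right] at hs
    have hg := mul_le_mul_of_nonneg_left hst hη1.1
    linarith
  have hkey : L * D ^ 2 * η t' ≤ Real.sqrt (2 * H * L * D ^ 2 / T) + 2 * ε := by
    rcases le_or_gt (L * D ^ 2 * η t') (2 * ε) with hle | hgt
    · linarith [Real.sqrt_nonneg (2 * H * L * D ^ 2 / T)]
    · have hm := (hη t' ht'1 ht'T).1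
      have hsum : ∀ n, n ≤ T →
          n * (η t' * (L * D ^ 2 * η t' - 2 * ε) / 2) ≤ f (x n) - f (x 0) := by
        intro n
        induction n with
        | zero => intro _; simp
        | succ n ih =>
          intro hn
          have h1 := ih (by omega)
          have h2 := hascent n hn
          have h3 := ht'min (n + 1) (by omega) hn
          have h4 : η t' * (L * D ^ 2 * η t' - 2 * ε) ≤
              η (n + 1) * (L * D ^ 2 * η (n + 1) - 2 * ε) :=
            mul_le_mul h3 (by linarith [mul_le_mul_of_nonneg_left h3 hA.le]) (by linarith)
              (hm.trans h3)
          push_cast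
          linarith
      have hT' := hsum T le_rfl
      have hH' : f (x T) - f (x 0) ≤ H := by
        linarith [(hbound _ (hxK T le_rfl)).2, (hbound _ hx0).1]
      have hsq : (L * D ^ 2 * η t' - 2 * ε) ^ 2 ≤ 2 * H * L * D ^ 2 / T := by
        rw [le_div_iff₀ hTpos]
        have h1 := mul_le_mul_of_nonneg_left (hT'.trans hH') hA.le
        -- `(a - 2ε)² ≤ a (a - 2ε)` since `a > 2ε ≥ 0`
        have h2 : 0 ≤ 2 * ε * (L * D ^ 2 * η t' - 2 * ε) * T :=
          mul_nonneg (mul_nonneg (by linarith) (by linarith)) hTpos.le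
        linarith
      linarith [Real.le_sqrt_of_sq_le hsq]
  have hst := (abs_le.1 (hstep t' ht'1 ht'T)).1
  have ho := horacle (gradient f (x (t' - 1))) u hu
  rw [← hz t' ht'1 ht'T] at ho
  rw [inner_sub_right] at hst ⊢
  linarith
end

section
/- Under the Frank–Wolfe setup, suppose κ ≥ 1, the step sizes are η_t = min{1, 2κ/t}, f is (κ, τ, K₁, K₂)-locally gradient dominated, and all iterates x₀, x₁, …, x_T lie in K₁ ⊆ K. Then max_{x∈K} f(x) − f(x_T) ≤ 2κ²·max{L·D², H}/T + τ + κ·ε₀. -/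
/-!
Fix `y ∈ K` and put `h t = f y - f (x t) - τ - κ ε₀`, `C = max (L D²) H`. Smoothness, the oracle
guarantee and gradient domination give `h (t+1) ≤ (1 - η/κ) h t + η² C / 2` with `η = η (t+1)`,
and `frank_wolfe_recursion` turns this recursion into the bound `h t ≤ 2 κ² C / t`.

Since `τ` is allowed to be negative, boundedness of `f` alone does not control `h 0`. Instead,
gradient domination at `x 0` bounds `h 0` by `κ ⟪∇f (x 0), z - x 0⟫` for the oracle answer `z`, and
smoothness bounds this inner product by `f z - f (x 0) + L D² / 2 ≤ 3 C / 2`. As long as `t ≤ 2κ`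
the step size is `1`, and the recursion, a contraction with factor `1 - 1/κ`, keeps the bound
`h t ≤ C (κ/2 + κ²/(κ+t))`, which is at most `2 κ² C / t` in this range. For `t > 2κ` the step
size is `2κ/t` and the bound `2 κ² C / t` propagates by itself.
-/

open scoped RealInnerProductSpace

/-- The scalar recursion behind the Frank–Wolfe rate, with step sizes `min 1 (2κ/t)`. -/
lemma frank_wolfe_recursion (κ C : ℝ) (hκ : 1 ≤ κ) (hC : 0 ≤ C) (T : ℕ) (h : ℕ → ℝ)
    (h0 : h 0 ≤ 3 / 2 * κ * C)
    (hrec : ∀ t : ℕ, t + 1 ≤ T → h (t + 1) ≤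
      (1 - min 1 (2 * κ / (t + 1 : ℝ)) / κ) * h t + (min 1 (2 * κ / (t + 1 : ℝ))) ^ 2 * C / 2) :
    ∀ t : ℕ, t ≤ T → ((t : ℝ) ≤ 2 * κ → h t ≤ C * (κ / 2 + κ ^ 2 / (κ + t))) ∧
      (1 ≤ t → h t ≤ 2 * κ ^ 2 * C / t) := by
  have hκ0 : 0 < κ := by linarith
  intro t
  induction t with
  | zero =>
    refine fun _ => ⟨fun _ => h0.trans (le_of_eq ?_), fun h => by omega⟩
    push_cast
    field_simp
    ring
  | succ t ih =>
    intro ht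
    obtain ⟨ih1, ih2⟩ := ih (by omega)
    have hr := hrec t ht
    have ht0 : (0 : ℝ) ≤ t := Nat.cast_nonneg t
    push_cast
    by_cases hc : (t + 1 : ℝ) ≤ 2 * κ
    · have hm : min 1 (2 * κ / (t + 1 : ℝ)) = 1 :=
        min_eq_left ((one_le_div (by linarith)).2 hc)
      rw [hm] at hr
      have hA : h (t + 1) ≤ C * (κ / 2 + κ ^ 2 / (κ + (t + 1))) := by
        have hq : 0 ≤ 1 - 1 / κ := by
          rw [sub_nonneg, div_le_one hκ0]; exact hκ
        have h1 := mul_le_mul_of_nonneg_left (ih1 (by linarith)) hq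
        have h2 : (1 - 1 / κ) * (κ / 2 + κ ^ 2 / (κ + t)) + 1 / 2
            ≤ κ / 2 + κ ^ 2 / (κ + (t + 1)) := by
          have e : (1 - 1 / κ) * (κ / 2 + κ ^ 2 / (κ + t)) + 1 / 2
              = κ / 2 + κ * (κ - 1) / (κ + t) := by
            field_simp
            ring
          rw [e]
          refine add_le_add_right ?_ _
          rw [div_le_div_iff₀ (by linarith) (by linarith)]
          nlinarith [mul_nonneg hκ0.le ht0]
        nlinarith [mul_le_mul_of_nonneg_left h2 hC]
      refine ⟨fun _ => hA, fun _ => hA.trans ?_⟩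
      have h3 : κ / 2 ≤ κ ^ 2 / (t + 1) := by
        rw [div_le_div_iff₀ (by norm_num) (by linarith)]
        nlinarith
      have h4 : κ ^ 2 / (κ + (t + 1)) ≤ κ ^ 2 / (t + 1) :=
        div_le_div_of_nonneg_left (sq_nonneg κ) (by linarith) (by linarith)
      calc C * (κ / 2 + κ ^ 2 / (κ + (t + 1)))
          ≤ C * (κ ^ 2 / (t + 1) + κ ^ 2 / (t + 1)) := by gcongr
        _ = 2 * κ ^ 2 * C / (t + 1) := by ring
    · refine ⟨fun h => absurd h hc, fun _ => ?_⟩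
      push Not at hc
      have ht1 : 1 ≤ t := by
        have : (0 : ℝ) < t := by linarith
        exact_mod_cast this
      have ht1' : (1 : ℝ) ≤ t := by exact_mod_cast ht1
      have hm : min 1 (2 * κ / (t + 1 : ℝ)) = 2 * κ / (t + 1) :=
        min_eq_right ((div_le_one (by linarith)).2 hc.le)
      rw [hm] at hr
      have e : 2 * κ / (t + 1 : ℝ) / κ = 2 / (t + 1) := by field_simp
      rw [e] at hr
      have hq : (0 : ℝ) ≤ 1 - 2 / (t + 1) := by
        rw [sub_nonneg, div_le_one (by linarith)]; linarith
      have h1 := mul_le_mul_of_nonneg_left (ih2 ht1) hq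
      have h2 : (1 - 2 / (t + 1 : ℝ)) * (1 / t) + 1 / (t + 1) ^ 2 ≤ 1 / (t + 1) := by
        have e2 : 1 / (t + 1 : ℝ) - ((1 - 2 / (t + 1 : ℝ)) * (1 / t) + 1 / (t + 1) ^ 2)
            = 1 / (t * (t + 1) ^ 2) := by
          field_simp
          ring
        have : (0 : ℝ) ≤ 1 / (t * (t + 1) ^ 2) := by positivity
        linarith
      have hk : 0 ≤ 2 * κ ^ 2 * C := by positivity
      calc h (t + 1) ≤ (1 - 2 / (t + 1 : ℝ)) * (2 * κ ^ 2 * C / t)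
            + (2 * κ / (t + 1)) ^ 2 * C / 2 := by linarith
        _ = 2 * κ ^ 2 * C * ((1 - 2 / (t + 1 : ℝ)) * (1 / t) + 1 / (t + 1) ^ 2) := by
          field_simp
        _ ≤ 2 * κ ^ 2 * C * (1 / (t + 1)) := mul_le_mul_of_nonneg_left h2 hk
        _ = 2 * κ ^ 2 * C / (t + 1) := by ring

/-- **Frank–Wolfe, gradient-dominated case.**
Under the Frank–Wolfe setup, if `κ ≥ 1`, the step sizes are `η t = min 1 (2κ/t)`,
`f` is `(κ, τ, K₁, K₂)`-locally gradient dominated, and all iterates `x 0, …, x T`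
lie in `K₁ ⊆ K`, then `max_{x ∈ K} f x − f (x T) ≤ 2κ²·max{L·D², H}/T + τ + κ·ε₀`. -/
theorem frank_wolfe_gradient_dominated {d : ℕ} (K K₁ K₂ : Set (EuclideanSpace ℝ (Fin d)))
    (hKconv : Convex ℝ K) (hKcomp : IsCompact K)
    (hK₁sub : K₁ ⊆ K) (hK₂sub : K₂ ⊆ K) (hK₂ne : K₂.Nonempty)
    (p : Seminorm ℝ (EuclideanSpace ℝ (Fin d))) (D L H ε₀ κ τ : ℝ)
    (hD : 0 < D) (hL : 0 < L) (hH : 0 ≤ H) (hε₀ : 0 ≤ ε₀) (hκ : 1 ≤ κ)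
    (hdiam : ∀ x ∈ K, ∀ y ∈ K, p (x - y) ≤ D)
    (f : EuclideanSpace ℝ (Fin d) → ℝ)
    (hdiff : ∀ x ∈ K, DifferentiableAt ℝ f x)
    (hsmooth : ∀ x ∈ K, ∀ y ∈ K,
      |f y - f x - ⟪gradient f x, y - x⟫| ≤ L / 2 * (p (x - y)) ^ 2)
    (hbound : ∀ x ∈ K, f x ∈ Set.Icc (0 : ℝ) H)
    (hgraddom : ∀ w ∈ K₁, ∀ y ∈ K,
      f y - f w ≤ κ * sSup ((fun u => ⟪gradient f w, u - w⟫) '' K₂) + τ)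
    (O : EuclideanSpace ℝ (Fin d) → EuclideanSpace ℝ (Fin d))
    (hOmem : ∀ v, O v ∈ K)
    (horacle : ∀ v, ∀ u ∈ K₂, ⟪v, u⟫ - ε₀ ≤ ⟪v, O v⟫)
    (T : ℕ) (hT : 1 ≤ T)
    (η : ℕ → ℝ) (x z : ℕ → EuclideanSpace ℝ (Fin d))
    (hx0 : x 0 ∈ K)
    (hη : ∀ t, 1 ≤ t → t ≤ T → η t = min 1 (2 * κ / t))
    (hz : ∀ t, 1 ≤ t → t ≤ T → z t = O (gradient f (x (t - 1))))
    (hx : ∀ t, 1 ≤ t → t ≤ T → x t = (1 - η t) • x (t - 1) + η t • z t)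
    (hiter : ∀ t, t ≤ T → x t ∈ K₁) :
    ∀ y ∈ K, f y - f (x T) ≤ 2 * κ ^ 2 * max (L * D ^ 2) H / T + τ + κ * ε₀ := by
  intro y hy
  have hκ0 : 0 < κ := by linarith
  set C := max (L * D ^ 2) H with hCdef
  have hC1 : L * D ^ 2 ≤ C := le_max_left _ _
  have hC2 : H ≤ C := le_max_right _ _
  have hC : 0 ≤ C := hH.trans hC2
  have hgap : ∀ w ∈ K₁, f y - f w - τ - κ * ε₀
      ≤ κ * ⟪gradient f w, O (gradient f w) - w⟫ := by
    intro w hw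
    have hsup : sSup ((fun u => ⟪gradient f w, u - w⟫) '' K₂)
        ≤ ⟪gradient f w, O (gradient f w) - w⟫ + ε₀ := by
      apply csSup_le (hK₂ne.image _)
      rintro _ ⟨u, hu, rfl⟩
      have := horacle (gradient f w) u hu
      simp only [inner_sub_right]
      linarith
    have h1 := hgraddom w hw y hy
    have h2 := mul_le_mul_of_nonneg_left hsup hκ0.le
    linarith
  have h0 : f y - f (x 0) - τ - κ * ε₀ ≤ 3 / 2 * κ * C := by
    have hz0 := hOmem (gradient f (x 0))
    have h1 := (abs_le.1 (hsmooth (x 0) hx0 _ hz0)).1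
    have h2 : p (x 0 - O (gradient f (x 0))) ^ 2 ≤ D ^ 2 :=
      pow_le_pow_left₀ (apply_nonneg p _) (hdiam _ hx0 _ hz0) 2
    have h3 := mul_le_mul_of_nonneg_left h2 hL.le
    have h4 := (hbound _ hz0).2
    have h5 := (hbound _ hx0).1
    have h6 : ⟪gradient f (x 0), O (gradient f (x 0)) - x 0⟫ ≤ 3 / 2 * C := by linarith
    have h7 := mul_le_mul_of_nonneg_left h6 hκ0.le
    have h8 := hgap (x 0) (hiter 0 (Nat.zero_le _))
    linarith
  have hrec : ∀ t : ℕ, t + 1 ≤ T → f y - f (x (t + 1)) - τ - κ * ε₀ ≤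
      (1 - min 1 (2 * κ / (t + 1 : ℝ)) / κ) * (f y - f (x t) - τ - κ * ε₀)
        + (min 1 (2 * κ / (t + 1 : ℝ))) ^ 2 * C / 2 := by
    intro t ht
    have e1 := hη (t + 1) (by omega) ht
    have e2 := hz (t + 1) (by omega) ht
    have e3 := hx (t + 1) (by omega) ht
    push_cast at e1
    rw [← e1]
    simp only [Nat.add_sub_cancel] at e2 e3
    have hη0 : 0 ≤ η (t + 1) := by
      rw [e1]
      exact le_min zero_le_one (by positivity)
    have hxt := hK₁sub (hiter t (by omega))
    have hxs := hK₁sub (hiter (t + 1) ht)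
    have hzK : z (t + 1) ∈ K := e2 ▸ hOmem _
    have hd : x (t + 1) - x t = η (t + 1) • (z (t + 1) - x t) := by
      rw [e3, sub_smul, smul_sub, one_smul]
      abel
    have hpe : p (x t - x (t + 1)) = η (t + 1) * p (x t - z (t + 1)) := by
      have hd' : x t - x (t + 1) = η (t + 1) • (x t - z (t + 1)) := by
        rw [← neg_sub, hd, ← smul_neg, neg_sub]
      rw [hd', map_smul_eq_mul, Real.norm_of_nonneg hη0]
    have h1 := (abs_le.1 (hsmooth _ hxt _ hxs)).1
    rw [hpe, hd, real_inner_smul_right] at h1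
    have h2 : p (x t - z (t + 1)) ^ 2 ≤ D ^ 2 :=
      pow_le_pow_left₀ (apply_nonneg p _) (hdiam _ hxt _ hzK) 2
    have h3 : L * p (x t - z (t + 1)) ^ 2 ≤ C :=
      (mul_le_mul_of_nonneg_left h2 hL.le).trans hC1
    have h4 := mul_le_mul_of_nonneg_left h3 (sq_nonneg (η (t + 1)))
    have h5 := hgap (x t) (hiter t (by omega))
    rw [← e2] at h5
    have h6 := mul_le_mul_of_nonneg_left h5 (div_nonneg hη0 hκ0.le)
    have e4 : η (t + 1) / κ * (κ * ⟪gradient f (x t), z (t + 1) - x t⟫)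
        = η (t + 1) * ⟪gradient f (x t), z (t + 1) - x t⟫ := by
      field_simp
    rw [e4] at h6
    rw [mul_pow] at h1
    linarith
  have := (frank_wolfe_recursion κ C hκ hC T (fun t => f y - f (x t) - τ - κ * ε₀) h0 hrec
    T le_rfl).2 hT
  linarith
end

section
/- Under the Frank–Wolfe setup, suppose every step size satisfies |L·D²·η_t − ∇f(x_{t−1})ᵀ(z_t − x_{t−1})| ≤ ε for some ε ≥ 0. Then min_{1≤t≤T} (∇f(x_{t−1})ᵀ(z_t − x_{t−1}))² ≤ 2·H·L·D²/T + ε². -/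
/-!
Write `g = ⟪∇f(x), z - x⟫` and `y = (1 - η) x + η z`. Smoothness along the segment gives
`f y - f x ≥ η g - L D² η² / 2`, and completing the square turns the right-hand side into
`(g² - (L D² η - g)²) / (2 L D²)`, which is at least `(g² - ε²) / (2 L D²)` by the step-size
condition (`frank_wolfe_step`). If every gap satisfied `g² > 2 H L D² / T + ε²`, each step would
increase `f` by more than `H / T`, so `T` steps would increase it by more than `H`, which is
impossible as `f` takes values in `[0, H]` on `K`.
-/

open scoped RealInnerProductSpace

/-- One Frank–Wolfe step increases `f` by at least `(g² - ε²) / (2 L D²)`, where `g` is the gap;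
the inequality is stated with the denominator cleared. -/
theorem frank_wolfe_step {E : Type*} [NormedAddCommGroup E] [InnerProductSpace ℝ E]
    (p : Seminorm ℝ E) {D L ε η a b : ℝ} (hL : 0 < L) (hD : 0 < D) {x y z v : E}
    (hdiam : p (x - z) ≤ D) (hy : y = (1 - η) • x + η • z)
    (hsmooth : |b - a - ⟪v, y - x⟫| ≤ L / 2 * (p (x - y)) ^ 2)
    (hstep : |L * D ^ 2 * η - ⟪v, z - x⟫| ≤ ε) :
    ⟪v, z - x⟫ ^ 2 - ε ^ 2 ≤ 2 * (L * D ^ 2) * (b - a) := by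
  have hyx : y - x = η • (z - x) := by rw [hy]; module
  have hxy : x - y = η • (x - z) := by rw [hy]; module
  rw [hyx, hxy, inner_smul_right, map_smul_eq_mul, mul_pow, Real.norm_eq_abs, sq_abs] at hsmooth
  have hp : p (x - z) ^ 2 ≤ D ^ 2 := pow_le_pow_left₀ (apply_nonneg p _) hdiam 2
  have hinc : η * ⟪v, z - x⟫ - L / 2 * (η ^ 2 * D ^ 2) ≤ b - a := by
    have h1 := (abs_le.mp hsmooth).1
    have h2 : L / 2 * (η ^ 2 * p (x - z) ^ 2) ≤ L / 2 * (η ^ 2 * D ^ 2) := by gcongr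
    linarith
  have hsq : (L * D ^ 2 * η - ⟪v, z - x⟫) ^ 2 ≤ ε ^ 2 := sq_le_sq.mpr (hstep.trans (le_abs_self ε))
  have hmul := mul_le_mul_of_nonneg_left hinc (by positivity : 0 ≤ 2 * (L * D ^ 2))
  linarith

/-- **Frank–Wolfe, non-convex case (minimum squared Frank-Wolfe gap).**
Under the Frank–Wolfe setup, if every step size satisfies
`|L·D²·η t − ⟪∇f(x (t-1)), z t − x (t-1)⟫| ≤ ε`, then
`min_{1 ≤ t ≤ T} ⟪∇f(x (t-1)), z t − x (t-1)⟫² ≤ 2·H·L·D²/T + ε²`. -/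
theorem frank_wolfe_min_gap {d : ℕ} (K K₂ : Set (EuclideanSpace ℝ (Fin d)))
    (hKconv : Convex ℝ K) (hKcomp : IsCompact K) (hK₂sub : K₂ ⊆ K) (hK₂ne : K₂.Nonempty)
    (p : Seminorm ℝ (EuclideanSpace ℝ (Fin d))) (D L H ε₀ ε : ℝ)
    (hD : 0 < D) (hL : 0 < L) (hH : 0 ≤ H) (hε₀ : 0 ≤ ε₀) (hε : 0 ≤ ε)
    (hdiam : ∀ x ∈ K, ∀ y ∈ K, p (x - y) ≤ D)
    (f : EuclideanSpace ℝ (Fin d) → ℝ)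
    (hdiff : ∀ x ∈ K, DifferentiableAt ℝ f x)
    (hsmooth : ∀ x ∈ K, ∀ y ∈ K,
      |f y - f x - ⟪gradient f x, y - x⟫| ≤ L / 2 * (p (x - y)) ^ 2)
    (hbound : ∀ x ∈ K, f x ∈ Set.Icc (0 : ℝ) H)
    (O : EuclideanSpace ℝ (Fin d) → EuclideanSpace ℝ (Fin d))
    (hOmem : ∀ v, O v ∈ K)
    (horacle : ∀ v, ∀ u ∈ K₂, ⟪v, u⟫ - ε₀ ≤ ⟪v, O v⟫)
    (T : ℕ) (hT : 1 ≤ T)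
    (η : ℕ → ℝ) (x z : ℕ → EuclideanSpace ℝ (Fin d))
    (hx0 : x 0 ∈ K)
    (hη : ∀ t, 1 ≤ t → t ≤ T → η t ∈ Set.Icc (0 : ℝ) 1)
    (hz : ∀ t, 1 ≤ t → t ≤ T → z t = O (gradient f (x (t - 1))))
    (hx : ∀ t, 1 ≤ t → t ≤ T → x t = (1 - η t) • x (t - 1) + η t • z t)
    (hstep : ∀ t, 1 ≤ t → t ≤ T →
      |L * D ^ 2 * η t - ⟪gradient f (x (t - 1)), z t - x (t - 1)⟫| ≤ ε) :
    ∃ t, 1 ≤ t ∧ t ≤ T ∧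
      ⟪gradient f (x (t - 1)), z t - x (t - 1)⟫ ^ 2 ≤ 2 * H * L * D ^ 2 / T + ε ^ 2 := by
  by_contra! hgap
  have hTpos : (0 : ℝ) < T := by exact_mod_cast hT
  -- The strict growth bound is claimed for `n ≥ 1` only, since it fails at `n = 0`.
  have key : ∀ n : ℕ, n ≤ T → x n ∈ K ∧ f (x 0) + n * (H / T) ≤ f (x n) ∧
      (1 ≤ n → f (x 0) + n * (H / T) < f (x n)) := by
    intro n
    induction n with
    | zero => exact fun _ => ⟨hx0, by simp, by simp⟩
    | succ n ih =>
      intro hn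
      obtain ⟨hxn, hle, -⟩ := ih (by omega)
      have h1 : 1 ≤ n + 1 := by omega
      have hzK : z (n + 1) ∈ K := hz _ h1 hn ▸ hOmem _
      obtain ⟨hη0, hη1⟩ := hη _ h1 hn
      have hxs := hx _ h1 hn
      have hg := hgap _ h1 hn
      have hst := hstep _ h1 hn
      rw [Nat.add_sub_cancel] at hxs hg hst
      have hxK : x (n + 1) ∈ K :=
        hxs ▸ hKconv hxn hzK (by linarith) hη0 (by ring)
      have hinc := frank_wolfe_step p hL hD (hdiam _ hxn _ hzK) hxs (hsmooth _ hxn _ hxK) hst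
      have hlt : H / T < f (x (n + 1)) - f (x n) := by
        have hc : 0 < 2 * (L * D ^ 2) := by positivity
        refine lt_of_mul_lt_mul_left ?_ hc.le
        calc 2 * (L * D ^ 2) * (H / T) = 2 * H * L * D ^ 2 / T := by ring
          _ < _ := by linarith
      have hnew : f (x 0) + ((n + 1 : ℕ) : ℝ) * (H / T) < f (x (n + 1)) := by
        push_cast
        linarith
      exact ⟨hxK, hnew.le, fun _ => hnew⟩
  obtain ⟨hxT, -, hlt⟩ := key T le_rfl
  have h := hlt hT
  rw [mul_div_cancel₀ H hTpos.ne'] at h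
  linarith [(hbound _ hx0).1, (hbound _ hxT).2]
end

section
/- Under the Frank–Wolfe setup, suppose f is (κ, τ, K₁, K₂)-locally gradient dominated with κ > 0 and x_{t−1} ∈ K₁ for some step t. Writing h_s = max_{x∈K} f(x) − f(x_s), the single Frank–Wolfe step with any step size η_t ∈ [0,1] satisfies h_t ≤ (1 − η_t/κ)·h_{t−1} + η_t²·L·D²/2 + η_t·(ε₀ + τ/κ). -/
open scoped RealInnerProductSpace

/-!
By smoothness, the step from `w = x (t - 1)` to `x t = w + η (z - w)` raises `f` by at least
`η ⟪∇f w, z - w⟫ - η² L D² / 2`. The oracle guarantee bounds `⟪∇f w, z - w⟫ + ε₀` from below by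
the supremum of `⟪∇f w, u - w⟫` over `K₂`, which local gradient domination bounds from below by
`(h - τ) / κ`, where `h = sup f - f w`. Subtracting the increase from `h` gives the claim.
-/

/-- **Frank–Wolfe, single-step progress under local gradient domination.**
Under the Frank–Wolfe setup, if `f` is `(κ, τ, K₁, K₂)`-locally gradient dominated
with `κ > 0` and `x (t-1) ∈ K₁` for some step `t`, then, writing
`h s = max_{x ∈ K} f x − f (x s)`, a single Frank–Wolfe step with any step size
`η t ∈ [0,1]` satisfies
`h t ≤ (1 − η t/κ)·h (t-1) + η t²·L·D²/2 + η t·(ε₀ + τ/κ)`. -/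
theorem frank_wolfe_single_step {d : ℕ} (K K₁ K₂ : Set (EuclideanSpace ℝ (Fin d)))
    (hKconv : Convex ℝ K) (hKcomp : IsCompact K)
    (hK₁sub : K₁ ⊆ K) (hK₂sub : K₂ ⊆ K) (hK₂ne : K₂.Nonempty)
    (p : Seminorm ℝ (EuclideanSpace ℝ (Fin d))) (D L H ε₀ κ τ : ℝ)
    (hD : 0 < D) (hL : 0 < L) (hH : 0 ≤ H) (hε₀ : 0 ≤ ε₀) (hκ : 0 < κ)
    (hdiam : ∀ x ∈ K, ∀ y ∈ K, p (x - y) ≤ D)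
    (f : EuclideanSpace ℝ (Fin d) → ℝ)
    (hdiff : ∀ x ∈ K, DifferentiableAt ℝ f x)
    (hsmooth : ∀ x ∈ K, ∀ y ∈ K,
      |f y - f x - ⟪gradient f x, y - x⟫| ≤ L / 2 * (p (x - y)) ^ 2)
    (hbound : ∀ x ∈ K, f x ∈ Set.Icc (0 : ℝ) H)
    (hgraddom : ∀ w ∈ K₁, ∀ y ∈ K,
      f y - f w ≤ κ * sSup ((fun u => ⟪gradient f w, u - w⟫) '' K₂) + τ)
    (O : EuclideanSpace ℝ (Fin d) → EuclideanSpace ℝ (Fin d))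
    (hOmem : ∀ v, O v ∈ K)
    (horacle : ∀ v, ∀ u ∈ K₂, ⟪v, u⟫ - ε₀ ≤ ⟪v, O v⟫)
    (η : ℕ → ℝ) (x z : ℕ → EuclideanSpace ℝ (Fin d))
    (t : ℕ) (ht : 1 ≤ t)
    (hprev : x (t - 1) ∈ K₁)
    (hη : η t ∈ Set.Icc (0 : ℝ) 1)
    (hz : z t = O (gradient f (x (t - 1))))
    (hx : x t = (1 - η t) • x (t - 1) + η t • z t) :
    sSup (f '' K) - f (x t) ≤
      (1 - η t / κ) * (sSup (f '' K) - f (x (t - 1))) +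
        η t ^ 2 * L * D ^ 2 / 2 + η t * (ε₀ + τ / κ) := by
  have hw : x (t - 1) ∈ K := hK₁sub hprev
  have hzK : z t ∈ K := hz ▸ hOmem _
  obtain ⟨h0, h1⟩ := hη
  generalize hwdef : x (t - 1) = w at *
  have hstep : x t - w = η t • (z t - w) := by rw [hx]; module
  have hxK : x t ∈ K := by
    rw [hx]; exact hKconv hw hzK (by linarith) h0 (by ring)
  have hS : sSup ((fun u => ⟪gradient f w, u - w⟫) '' K₂) ≤ ⟪gradient f w, z t - w⟫ + ε₀ := by
    refine csSup_le (hK₂ne.image _) ?_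
    rintro _ ⟨u, hu, rfl⟩
    have := horacle (gradient f w) u hu
    rw [← hz] at this
    simp only [inner_sub_right]
    linarith
  have hM : sSup (f '' K) ≤ f w + (κ * (⟪gradient f w, z t - w⟫ + ε₀) + τ) := by
    refine csSup_le (Set.Nonempty.image f ⟨w, hw⟩) ?_
    rintro _ ⟨y, hy, rfl⟩
    have := hgraddom w hprev y hy
    have := mul_le_mul_of_nonneg_left hS hκ.le
    linarith
  have hp : p (w - x t) ≤ η t * D := by
    have he : w - x t = η t • (w - z t) := by rw [hx]; module
    rw [he, map_smul_eq_mul, Real.norm_of_nonneg h0]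
    exact mul_le_mul_of_nonneg_left (hdiam w hw _ hzK) h0
  have hp2 : L / 2 * p (w - x t) ^ 2 ≤ L / 2 * (η t * D) ^ 2 := by
    have := apply_nonneg p (w - x t)
    gcongr
  have hsm := (abs_le.mp (hsmooth w hw _ hxK)).1
  rw [hstep, real_inner_smul_right] at hsm
  -- Gradient domination divided by `κ`: the linear gain is at least `(h - τ) / κ - ε₀`.
  have hgain : (sSup (f '' K) - f w - τ) / κ ≤ ⟪gradient f w, z t - w⟫ + ε₀ := by
    rw [div_le_iff₀ hκ]; linarith
  have hgainη := mul_le_mul_of_nonneg_left hgain h0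
  have hexpand : η t * ((sSup (f '' K) - f w - τ) / κ)
      = η t / κ * (sSup (f '' K) - f w) - η t * (τ / κ) := by ring
  linarith
end

section
/- Let C ≥ 1 and D, E, H ≥ 0, and let (g_t)_{t≥0} be a nonnegative sequence with g_t ≤ H for all t, satisfying g_t ≤ (1 − σ_t/C)·g_{t−1} + σ_t²·D + σ_t·E for all t ≥ 1, where σ_t = min{1, 2C/t}. Then for every t ≥ 1, g_t ≤ 2C²·max{2D, H}/t + C·E. -/
/-!
Write `M = max (2D) H` and `K = 2C²M`. As long as `t ≤ 2C²`, the a priori bound `g t ≤ H ≤ M`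
already gives `g t ≤ K / t`. Once `t > 2C² ≥ 2C`, the step size is `2C/t`, the contraction factor
is `1 - 2/t`, and the bound follows by induction: the `E` terms reproduce `C * E` exactly, the `D`
term is at most `K / t²`, and `(1 - 2/t) / (t - 1) + 1 / t² ≤ 1 / t`.
-/

/-- **Recursion lemma for Frank–Wolfe step sizes (Claim on the recursive sequence).**
Let `C ≥ 1` and `D, E, H ≥ 0`, and let `(g t)` be a nonnegative sequence bounded by `H`
satisfying `g t ≤ (1 − σ t/C)·g (t-1) + (σ t)²·D + (σ t)·E` for all `t ≥ 1`, where
`σ t = min 1 (2C/t)`. Then for every `t ≥ 1`, `g t ≤ 2C²·max (2D) H / t + C·E`. -/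
theorem recursive_sequence_bound (C D E H : ℝ) (hC : 1 ≤ C) (hD : 0 ≤ D) (hE : 0 ≤ E)
    (hH : 0 ≤ H) (g : ℕ → ℝ) (hg0 : ∀ t, 0 ≤ g t) (hgH : ∀ t, g t ≤ H)
    (hrec : ∀ t : ℕ, 1 ≤ t →
      g t ≤ (1 - min 1 (2 * C / t) / C) * g (t - 1) +
        (min 1 (2 * C / t)) ^ 2 * D + min 1 (2 * C / t) * E) :
    ∀ t : ℕ, 1 ≤ t → g t ≤ 2 * C ^ 2 * max (2 * D) H / t + C * E := by
  intro t ht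
  have hMH : H ≤ max (2 * D) H := le_max_right _ _
  have hMD : 2 * D ≤ max (2 * D) H := le_max_left _ _
  generalize max (2 * D) H = M at hMH hMD ⊢
  have hM : 0 ≤ M := hH.trans hMH
  have hC2 : C ≤ C ^ 2 := by nlinarith
  have hCE : 0 ≤ C * E := by positivity
  induction t, ht using Nat.le_induction with
  | base =>
    have h1 := hgH 1
    have h2 : 1 * M ≤ 2 * C ^ 2 * M := mul_le_mul_of_nonneg_right (by linarith) hM
    rw [Nat.cast_one, div_one]
    linarith
  | succ n hn ih =>
    have hn' : (1 : ℝ) ≤ n := by exact_mod_cast hn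
    have hr := hrec (n + 1) (by omega)
    rw [Nat.add_sub_cancel] at hr
    push_cast at hr ⊢
    by_cases hs : (n : ℝ) + 1 ≤ 2 * C ^ 2
    · have h2 : M ≤ 2 * C ^ 2 * M / (n + 1) := by
        rw [le_div_iff₀ (by positivity)]
        nlinarith
      linarith [hgH (n + 1)]
    · have hmin : min 1 (2 * C / ((n : ℝ) + 1)) = 2 * C / (n + 1) := by
        apply min_eq_right
        rw [div_le_one (by positivity)]
        linarith
      have hcoef : 1 - 2 * C / ((n : ℝ) + 1) / C = (n - 1) / (n + 1) := by
        field_simp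
        ring
      rw [hmin, hcoef] at hr
      have hstep : ((n : ℝ) - 1) / (n + 1) * g n
          ≤ (n - 1) / (n + 1) * (2 * C ^ 2 * M / n + C * E) :=
        mul_le_mul_of_nonneg_left ih (div_nonneg (by linarith) (by positivity))
      have hDK : (2 * C / ((n : ℝ) + 1)) ^ 2 * D ≤ 2 * C ^ 2 * M / (n + 1) ^ 2 := by
        rw [div_pow, div_mul_eq_mul_div]
        refine div_le_div_of_nonneg_right ?_ (by positivity)
        nlinarith [mul_le_mul_of_nonneg_left hMD (sq_nonneg C)]
      -- With `k = n + 1`, this is `(1 - 2/k)/(k - 1) + 1/k² ≤ 1/k`; the gap is `1/(k²(k - 1))`.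
      have hgap : 2 * C ^ 2 * M / ((n : ℝ) + 1)
          - ((n - 1) / (n + 1) * (2 * C ^ 2 * M / n) + 2 * C ^ 2 * M / (n + 1) ^ 2)
          = 2 * C ^ 2 * M / (n * (n + 1) ^ 2) := by
        field_simp
        ring
      have hgap0 : 0 ≤ 2 * C ^ 2 * M / ((n : ℝ) * (n + 1) ^ 2) := by positivity
      -- `C * E` is the fixed point of the recursion without its `D` term.
      have hfix : ((n : ℝ) - 1) / (n + 1) * (C * E) + 2 * C / (n + 1) * E = C * E := by
        field_simp
        ring
      rw [mul_add] at hstep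
      linarith
end

section
/- For any two policies π and π′, |V^{π′} − V^π − (∇_π V^π)ᵀ(π′ − π)| ≤ (γ/(1−γ)³)·∥π′ − π∥_{∞,1}², i.e., the value function V^π is 2γ/(1−γ)³-smooth in the ∥·∥_{∞,1} norm on the space of policies. -/
/-! The constant comes from subtracting two exact first-order expansions.

Write `D^π_μ = ∑ₜ γᵗ (P^π)ᵗ μ` for the unnormalized visitation measure (`occ` below) and
`δ = π' - π`. The gradient term is `∑ₛ D^π(s) ∑ₐ δ(s,a) Q^π(s,a)`, while the performance difference
lemma (`performance_difference`) gives `V^{π'} - V^π = ∑ₛ D^{π'}(s) ∑ₐ δ(s,a) Q^π(s,a)`. Hence the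
quantity to bound is `∑ₛ (D^{π'} - D^π)(s) ∑ₐ δ(s,a) Q^π(s,a)`, at most
`∥D^{π'} - D^π∥₁ · ∥δ∥_{∞,1} / (1-γ)` because `0 ≤ Q^π ≤ 1/(1-γ)`.

The fixed-point equation `D^π = μ + γ P^π D^π` (`occ_fixed`) yields
`D^{π'} - D^π = γ P^{π'} (D^{π'} - D^π) + γ (P^{π'} - P^π) D^π`. Since `P^{π'}` does not increase
the `ℓ₁` norm and `∥D^π∥₁ = 1/(1-γ)`, it follows that
`∥D^{π'} - D^π∥₁ ≤ γ ∥δ∥_{∞,1} / (1-γ)²` (`occ_diff_le`). -/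

open Finset

noncomputable section

/-- `π` is a stochastic policy: `π s` is a probability distribution over actions. -/
def IsPolicy {S A : Type*} [Fintype A] (π : S → A → ℝ) : Prop :=
  (∀ s a, 0 ≤ π s a) ∧ ∀ s, ∑ a, π s a = 1

/-- `P` is a transition probability model: `P s a` is a distribution over next states. -/
def IsKernel {S A : Type*} [Fintype S] (P : S → A → S → ℝ) : Prop :=
  (∀ s a s', 0 ≤ P s a s') ∧ ∀ s a, ∑ s', P s a s' = 1

/-- `d` is a probability distribution over states. -/
def IsDist {S : Type*} [Fintype S] (d : S → ℝ) : Prop :=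
  (∀ s, 0 ≤ d s) ∧ ∑ s, d s = 1

/-- The Markov operator `P^π` induced by policy `π` acting on distributions over states:
`(P^π d)(s') = ∑_s ∑_a P(s'|s,a)·π(a|s)·d(s)`. -/
def markovStep {S A : Type*} [Fintype S] [Fintype A] (P : S → A → S → ℝ)
    (π : S → A → ℝ) (d : S → ℝ) : S → ℝ :=
  fun s' => ∑ s, ∑ a, P s a s' * π s a * d s

/-- The discounted state-visitation distribution
`d^π_μ(s) = (1−γ) ∑_{t≥0} γ^t Pr(s_t = s | π, s₀ ∼ μ)`. -/
def visitDist {S A : Type*} [Fintype S] [Fintype A] (P : S → A → S → ℝ) (γ : ℝ)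
    (π : S → A → ℝ) (μ : S → ℝ) : S → ℝ :=
  fun s => (1 - γ) * ∑' t : ℕ, γ ^ t * ((markovStep P π)^[t] μ) s

/-- The value function `V^π_μ = E[∑_{t≥0} γ^t r(s_t,a_t)]` with `s₀ ∼ μ`, actions from `π`. -/
def valueV {S A : Type*} [Fintype S] [Fintype A] (P : S → A → S → ℝ) (r : S → A → ℝ)
    (γ : ℝ) (π : S → A → ℝ) (μ : S → ℝ) : ℝ :=
  ∑' t : ℕ, γ ^ t * ∑ s, ((markovStep P π)^[t] μ) s * ∑ a, π s a * r s a

/-- The state-action value function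
`Q^π(s,a) = E[∑_{t≥0} γ^t r(s_t,a_t) | s₀ = s, a₀ = a, actions thereafter from π]`. -/
def valueQ {S A : Type*} [Fintype S] [Fintype A] [DecidableEq S] (P : S → A → S → ℝ)
    (r : S → A → ℝ) (γ : ℝ) (π : S → A → ℝ) (s : S) (a : A) : ℝ :=
  r s a + γ * ∑ s', P s a s' * valueV P r γ π (fun s'' => if s'' = s' then 1 else 0)

/-- The functional policy gradient `(∇_π V^π_μ)(s,a) = (1/(1−γ))·d^π_μ(s)·Q^π(s,a)`. -/
def gradV {S A : Type*} [Fintype S] [Fintype A] [DecidableEq S] (P : S → A → S → ℝ)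
    (r : S → A → ℝ) (γ : ℝ) (π : S → A → ℝ) (μ : S → ℝ) : S → A → ℝ :=
  fun s a => (1 / (1 - γ)) * visitDist P γ π μ s * valueQ P r γ π s a

/-- The pairing `xᵀ y = ∑_{s,a} x(s,a)·y(s,a)` on `ℝ^{S×A}`. -/
def dotSA {S A : Type*} [Fintype S] [Fintype A] (x y : S → A → ℝ) : ℝ :=
  ∑ s, ∑ a, x s a * y s a

/-- The norm `∥x∥_{∞,1} = max_{s∈S} ∑_{a∈A} |x(s,a)|` on `ℝ^{S×A}`. -/
def normInfOne {S A : Type*} [Fintype S] [Fintype A] [Nonempty S] (x : S → A → ℝ) : ℝ :=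
  ⨆ s, ∑ a, |x s a|

/-- The `ℓ₁` (total-variation) norm `∥d∥₁ = ∑_{s∈S} |d s|` on `ℝ^S`. -/
def normL1 {S : Type*} [Fintype S] (d : S → ℝ) : ℝ := ∑ s, |d s|

section Smoothness

variable {S A : Type*} [Fintype S] [Fintype A]

/-! ### The visitation measure and its flow equation -/

/-- The unnormalized discounted visitation measure `∑ₜ γᵗ (P^π)ᵗ μ`, i.e. `d^π_μ / (1-γ)`. -/
def occ (P : S → A → S → ℝ) (γ : ℝ) (π : S → A → ℝ) (μ : S → ℝ) : S → ℝ :=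
  fun s => ∑' t : ℕ, γ ^ t * ((markovStep P π)^[t] μ) s

lemma markovStep_pair (P : S → A → S → ℝ) (π : S → A → ℝ) (d w : S → ℝ) :
    ∑ s', markovStep P π d s' * w s' = ∑ s, d s * ∑ a, π s a * ∑ s', P s a s' * w s' := by
  simp only [markovStep, Finset.sum_mul, Finset.mul_sum]
  rw [Finset.sum_comm]
  refine Finset.sum_congr rfl fun s _ => ?_
  rw [Finset.sum_comm]
  refine Finset.sum_congr rfl fun a _ => Finset.sum_congr rfl fun s' _ => ?_
  ring

lemma markovStep_isDist {P : S → A → S → ℝ} {π : S → A → ℝ} (hP : IsKernel P) (hπ : IsPolicy π)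
    {d : S → ℝ} (hd : IsDist d) : IsDist (markovStep P π d) := by
  refine ⟨fun s' => Finset.sum_nonneg fun s _ => Finset.sum_nonneg fun a _ =>
    mul_nonneg (mul_nonneg (hP.1 _ _ _) (hπ.1 _ _)) (hd.1 _), ?_⟩
  have h := markovStep_pair P π d (fun _ => 1)
  simpa [hP.2, hπ.2, hd.2] using h

lemma iterate_isDist {P : S → A → S → ℝ} {π : S → A → ℝ} (hP : IsKernel P) (hπ : IsPolicy π)
    {d : S → ℝ} (hd : IsDist d) (t : ℕ) : IsDist ((markovStep P π)^[t] d) := by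
  induction t with
  | zero => exact hd
  | succ t ih =>
    rw [Function.iterate_succ_apply']
    exact markovStep_isDist hP hπ ih

lemma IsDist.le_one {d : S → ℝ} (hd : IsDist d) (s : S) : d s ≤ 1 := by
  rw [← hd.2]
  exact Finset.single_le_sum (fun i _ => hd.1 i) (Finset.mem_univ s)

lemma occ_hasSum {P : S → A → S → ℝ} {γ : ℝ} {π : S → A → ℝ} {μ : S → ℝ} (hP : IsKernel P)
    (hγ : γ ∈ Set.Ico (0 : ℝ) 1) (hπ : IsPolicy π) (hμ : IsDist μ) (s : S) :
    HasSum (fun t : ℕ => γ ^ t * ((markovStep P π)^[t] μ) s) (occ P γ π μ s) := by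
  apply Summable.hasSum
  refine Summable.of_nonneg_of_le
    (fun t => mul_nonneg (pow_nonneg hγ.1 t) ((iterate_isDist hP hπ hμ t).1 s)) (fun t => ?_)
    (summable_geometric_of_lt_one hγ.1 hγ.2)
  exact mul_le_of_le_one_right (pow_nonneg hγ.1 t) ((iterate_isDist hP hπ hμ t).le_one s)

lemma occ_nonneg {P : S → A → S → ℝ} {γ : ℝ} {π : S → A → ℝ} {μ : S → ℝ} (hP : IsKernel P)
    (hγ : γ ∈ Set.Ico (0 : ℝ) 1) (hπ : IsPolicy π) (hμ : IsDist μ) (s : S) :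
    0 ≤ occ P γ π μ s :=
  tsum_nonneg fun t => mul_nonneg (pow_nonneg hγ.1 t) ((iterate_isDist hP hπ hμ t).1 s)

lemma occ_pair_hasSum {P : S → A → S → ℝ} {γ : ℝ} {π : S → A → ℝ} {μ : S → ℝ} (hP : IsKernel P)
    (hγ : γ ∈ Set.Ico (0 : ℝ) 1) (hπ : IsPolicy π) (hμ : IsDist μ) (f : S → ℝ) :
    HasSum (fun t : ℕ => γ ^ t * ∑ s, ((markovStep P π)^[t] μ) s * f s)
      (∑ s, occ P γ π μ s * f s) := by
  have h := hasSum_sum (s := Finset.univ)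
    fun s _ => (occ_hasSum hP hγ hπ hμ s).mul_right (f s)
  simpa only [Finset.mul_sum, mul_assoc] using h

lemma occ_sum {P : S → A → S → ℝ} {γ : ℝ} {π : S → A → ℝ} {μ : S → ℝ} (hP : IsKernel P)
    (hγ : γ ∈ Set.Ico (0 : ℝ) 1) (hπ : IsPolicy π) (hμ : IsDist μ) :
    ∑ s, occ P γ π μ s = 1 / (1 - γ) := by
  have h := occ_pair_hasSum hP hγ hπ hμ (fun _ => 1)
  simp only [mul_one, (iterate_isDist hP hπ hμ _).2] at h
  rw [one_div]
  exact h.unique (hasSum_geometric_of_lt_one hγ.1 hγ.2)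

lemma valueV_eq_occ {P : S → A → S → ℝ} {γ : ℝ} {π : S → A → ℝ} {μ : S → ℝ} (r : S → A → ℝ)
    (hP : IsKernel P) (hγ : γ ∈ Set.Ico (0 : ℝ) 1) (hπ : IsPolicy π) (hμ : IsDist μ) :
    valueV P r γ π μ = ∑ s, occ P γ π μ s * ∑ a, π s a * r s a :=
  (occ_pair_hasSum hP hγ hπ hμ _).tsum_eq

/-- The Bellman flow equation `D = μ + γ P^π D` of the visitation measure. -/
lemma occ_fixed {P : S → A → S → ℝ} {γ : ℝ} {π : S → A → ℝ} {μ : S → ℝ} (hP : IsKernel P)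
    (hγ : γ ∈ Set.Ico (0 : ℝ) 1) (hπ : IsPolicy π) (hμ : IsDist μ) (s : S) :
    occ P γ π μ s = μ s + γ * markovStep P π (occ P γ π μ) s := by
  have h := (occ_pair_hasSum hP hγ hπ hμ (fun s' => ∑ a, P s' a s * π s' a)).mul_left γ
  have key : ∀ d : S → ℝ, ∑ s', d s' * ∑ a, P s' a s * π s' a = markovStep P π d s := by
    intro d
    simp only [markovStep, Finset.mul_sum]
    exact Finset.sum_congr rfl fun _ _ => Finset.sum_congr rfl fun _ _ => by ring
  simp only [key] at h
  rw [← h.tsum_eq]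
  unfold occ
  rw [(occ_hasSum hP hγ hπ hμ s).summable.tsum_eq_zero_add]
  simp only [pow_zero, Function.iterate_zero, id, one_mul, Function.iterate_succ_apply', pow_succ']
  simp only [mul_assoc]

/-- One-step unrolling of the value at its first transition. -/
lemma valueV_unroll {P : S → A → S → ℝ} {γ : ℝ} {π : S → A → ℝ} {μ : S → ℝ} (r : S → A → ℝ)
    (hP : IsKernel P) (hγ : γ ∈ Set.Ico (0 : ℝ) 1) (hπ : IsPolicy π) (hμ : IsDist μ) :
    valueV P r γ π μ
      = ∑ s, μ s * ∑ a, π s a * r s a + γ * valueV P r γ π (markovStep P π μ) := by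
  unfold valueV
  rw [(occ_pair_hasSum hP hγ hπ hμ _).summable.tsum_eq_zero_add, ← tsum_mul_left]
  simp only [pow_zero, Function.iterate_zero, id, one_mul, Function.iterate_succ_apply, pow_succ',
    mul_assoc]

/-! ### Lipschitz dependence of the visitation measure on the policy -/

/-- For an arbitrary signed weight `x` in place of a policy, `P^x` has `ℓ₁` operator norm at most any
bound `N` for `∥x∥_{∞,1}`. -/
lemma markovStep_norm_le {P : S → A → S → ℝ} (hP : IsKernel P) {x : S → A → ℝ} {N : ℝ}
    (hx : ∀ s, ∑ a, |x s a| ≤ N) (d : S → ℝ) :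
    normL1 (markovStep P x d) ≤ N * normL1 d := by
  calc normL1 (markovStep P x d)
      ≤ ∑ s', markovStep P (fun s a => |x s a|) (fun s => |d s|) s' * 1 := by
        refine Finset.sum_le_sum fun s' _ => ?_
        rw [mul_one]
        refine (Finset.abs_sum_le_sum_abs _ _).trans (Finset.sum_le_sum fun s _ => ?_)
        refine (Finset.abs_sum_le_sum_abs _ _).trans (Finset.sum_le_sum fun a _ => ?_)
        rw [abs_mul, abs_mul, abs_of_nonneg (hP.1 _ _ _)]
    _ = ∑ s, |d s| * ∑ a, |x s a| := by
        rw [markovStep_pair P _ _ (fun _ => 1)]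
        simp [hP.2]
    _ ≤ ∑ s, |d s| * N :=
        Finset.sum_le_sum fun s _ => mul_le_mul_of_nonneg_left (hx s) (abs_nonneg _)
    _ = N * normL1 d := by rw [normL1, ← Finset.sum_mul, mul_comm]

/-- Visitation measures are Lipschitz in the policy. -/
lemma occ_diff_le {P : S → A → S → ℝ} {γ : ℝ} {π π' : S → A → ℝ} {μ : S → ℝ} {N : ℝ}
    (hP : IsKernel P) (hγ : γ ∈ Set.Ico (0 : ℝ) 1) (hπ : IsPolicy π)
    (hπ' : IsPolicy π') (hμ : IsDist μ) (hN : ∀ s, ∑ a, |π' s a - π s a| ≤ N) :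
    normL1 (fun s => occ P γ π' μ s - occ P γ π μ s) ≤ γ * N / (1 - γ) ^ 2 := by
  have h1γ : 0 < 1 - γ := by linarith [hγ.2]
  set D := occ P γ π μ with hD
  set D' := occ P γ π' μ with hD'
  set e : S → ℝ := fun s => D' s - D s with he
  have hdec : ∀ s, e s = γ * markovStep P π' e s
      + γ * markovStep P (fun s a => π' s a - π s a) D s := by
    intro s
    have hlin : markovStep P π' e s + markovStep P (fun s a => π' s a - π s a) D s
        = markovStep P π' D' s - markovStep P π D s := by
      simp only [markovStep, he, ← Finset.sum_add_distrib, ← Finset.sum_sub_distrib]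
      exact Finset.sum_congr rfl fun _ _ => Finset.sum_congr rfl fun _ _ => by ring
    rw [← mul_add, hlin]
    simp only [he]
    have h1 := occ_fixed hP hγ hπ hμ s
    have h2 := occ_fixed hP hγ hπ' hμ s
    linarith
  have h1 : normL1 (markovStep P π' e) ≤ 1 * normL1 e := by
    refine markovStep_norm_le hP (fun s => ?_) e
    simp only [abs_of_nonneg (hπ'.1 s _), hπ'.2 s, le_refl]
  have h2 : normL1 (markovStep P (fun s a => π' s a - π s a) D) ≤ N * normL1 D :=
    markovStep_norm_le hP hN D
  have hDn : normL1 D = 1 / (1 - γ) := by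
    rw [← occ_sum hP hγ hπ hμ]
    exact Finset.sum_congr rfl fun s _ => abs_of_nonneg (occ_nonneg hP hγ hπ hμ s)
  have h3 : normL1 e ≤ γ * normL1 (markovStep P π' e)
      + γ * normL1 (markovStep P (fun s a => π' s a - π s a) D) := by
    simp only [normL1, Finset.mul_sum]
    rw [← Finset.sum_add_distrib]
    refine Finset.sum_le_sum fun s _ => ?_
    rw [hdec s]
    refine (abs_add_le _ _).trans ?_
    rw [abs_mul, abs_mul, abs_of_nonneg hγ.1]
  rw [hDn] at h2
  have h4 := mul_le_mul_of_nonneg_left h1 hγ.1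
  have h5 := mul_le_mul_of_nonneg_left h2 hγ.1
  have h6 : (1 - γ) * normL1 e ≤ γ * (N * (1 / (1 - γ))) := by linarith
  have h7 : γ * N / (1 - γ) ^ 2 = γ * (N * (1 / (1 - γ))) / (1 - γ) := by
    field_simp
  rw [h7, le_div_iff₀ h1γ]
  linarith

/-! ### Bellman equation and bounds on values -/

lemma valueV_mem {P : S → A → S → ℝ} {γ : ℝ} {π : S → A → ℝ} {μ : S → ℝ} {r : S → A → ℝ}
    (hP : IsKernel P) (hr : ∀ s a, r s a ∈ Set.Icc (0 : ℝ) 1)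
    (hγ : γ ∈ Set.Ico (0 : ℝ) 1) (hπ : IsPolicy π) (hμ : IsDist μ) :
    0 ≤ valueV P r γ π μ ∧ valueV P r γ π μ ≤ 1 / (1 - γ) := by
  rw [valueV_eq_occ r hP hγ hπ hμ, ← occ_sum hP hγ hπ hμ]
  constructor
  · exact Finset.sum_nonneg fun s _ => mul_nonneg (occ_nonneg hP hγ hπ hμ s)
      (Finset.sum_nonneg fun a _ => mul_nonneg (hπ.1 s a) (hr s a).1)
  · refine Finset.sum_le_sum fun s _ => mul_le_of_le_one_right (occ_nonneg hP hγ hπ hμ s) ?_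
    rw [← hπ.2 s]
    exact Finset.sum_le_sum fun a _ => mul_le_of_le_one_right (hπ.1 s a) (hr s a).2

variable [DecidableEq S]

lemma isDist_dirac (s : S) : IsDist (fun s'' : S => if s'' = s then (1 : ℝ) else 0) :=
  ⟨fun s' => by dsimp only; split_ifs <;> norm_num, by simp⟩

lemma iterate_linear (P : S → A → S → ℝ) (π : S → A → ℝ) (μ : S → ℝ) (t : ℕ) :
    (markovStep P π)^[t] μ = fun s' =>
      ∑ s, μ s * (markovStep P π)^[t] (fun s'' => if s'' = s then 1 else 0) s' := by
  induction t with
  | zero => funext s'; simp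
  | succ t ih =>
    funext s'
    simp only [Function.iterate_succ_apply']
    rw [ih]
    simp only [markovStep, Finset.mul_sum]
    symm
    rw [Finset.sum_comm]
    refine Finset.sum_congr rfl fun x _ => ?_
    rw [Finset.sum_comm]
    refine Finset.sum_congr rfl fun a _ => Finset.sum_congr rfl fun s _ => ?_
    ring

/-- The value is linear in the initial distribution. -/
lemma valueV_linear {P : S → A → S → ℝ} {γ : ℝ} {π : S → A → ℝ} {μ : S → ℝ} (r : S → A → ℝ)
    (hP : IsKernel P) (hγ : γ ∈ Set.Ico (0 : ℝ) 1) (hπ : IsPolicy π) :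
    valueV P r γ π μ
      = ∑ s, μ s * valueV P r γ π (fun s'' => if s'' = s then 1 else 0) := by
  have h := hasSum_sum (s := Finset.univ) fun s _ =>
    (occ_pair_hasSum hP hγ hπ (isDist_dirac s) (fun s => ∑ a, π s a * r s a)).mul_left (μ s)
  simp only [← valueV_eq_occ r hP hγ hπ (isDist_dirac _)] at h
  rw [← h.tsum_eq]
  unfold valueV
  refine tsum_congr fun t => ?_
  rw [iterate_linear]
  simp only [Finset.sum_mul]
  rw [Finset.sum_comm, Finset.mul_sum]
  refine Finset.sum_congr rfl fun s _ => ?_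
  simp only [mul_assoc]
  rw [← Finset.mul_sum]
  ring

/-- Bellman's equation `V^π(s) = ∑ₐ π(a|s) Q^π(s,a)`. -/
lemma bellman {P : S → A → S → ℝ} {γ : ℝ} {π : S → A → ℝ} (r : S → A → ℝ)
    (hP : IsKernel P) (hγ : γ ∈ Set.Ico (0 : ℝ) 1) (hπ : IsPolicy π) (s : S) :
    valueV P r γ π (fun s'' => if s'' = s then 1 else 0) = ∑ a, π s a * valueQ P r γ π s a := by
  rw [valueV_unroll r hP hγ hπ (isDist_dirac s), valueV_linear (μ := markovStep _ _ _) r hP hγ hπ,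
    markovStep_pair]
  simp only [ite_mul, one_mul, zero_mul, Finset.sum_ite_eq', Finset.mem_univ, if_true, valueQ,
    mul_add, Finset.sum_add_distrib]
  congr 1
  rw [Finset.mul_sum]
  exact Finset.sum_congr rfl fun a _ => by ring

lemma valueQ_abs_le {P : S → A → S → ℝ} {γ : ℝ} {π : S → A → ℝ} {r : S → A → ℝ}
    (hP : IsKernel P) (hr : ∀ s a, r s a ∈ Set.Icc (0 : ℝ) 1)
    (hγ : γ ∈ Set.Ico (0 : ℝ) 1) (hπ : IsPolicy π) (s : S) (a : A) :
    |valueQ P r γ π s a| ≤ 1 / (1 - γ) := by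
  have hV := fun s' : S => valueV_mem (r := r) hP hr hγ hπ (isDist_dirac s')
  have h0 : 0 ≤ ∑ s', P s a s' * valueV P r γ π (fun s'' => if s'' = s' then 1 else 0) :=
    Finset.sum_nonneg fun s' _ => mul_nonneg (hP.1 _ _ _) (hV s').1
  have h1 : ∑ s', P s a s' * valueV P r γ π (fun s'' => if s'' = s' then 1 else 0)
      ≤ 1 / (1 - γ) := by
    calc _ ≤ ∑ s', P s a s' * (1 / (1 - γ)) :=
          Finset.sum_le_sum fun s' _ => mul_le_mul_of_nonneg_left (hV s').2 (hP.1 _ _ _)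
      _ = 1 / (1 - γ) := by rw [← Finset.sum_mul, hP.2, one_mul]
  have h2 : 1 + γ * (1 / (1 - γ)) = 1 / (1 - γ) := by
    have : 1 - γ ≠ 0 := by linarith [hγ.2]
    field_simp
    ring
  have h3 := mul_le_mul_of_nonneg_left h1 hγ.1
  have h4 := mul_nonneg hγ.1 h0
  rw [valueQ, abs_of_nonneg (by linarith [(hr s a).1])]
  linarith [(hr s a).2]

/-! ### Performance difference -/

/-- The performance difference lemma: the change in value is the `Q^π`-weighted change of policy,
averaged over the visitation measure of the new policy. -/
lemma performance_difference {P : S → A → S → ℝ} {γ : ℝ} {π π' : S → A → ℝ} {μ : S → ℝ}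
    (r : S → A → ℝ) (hP : IsKernel P) (hγ : γ ∈ Set.Ico (0 : ℝ) 1) (hπ : IsPolicy π)
    (hπ' : IsPolicy π') (hμ : IsDist μ) :
    valueV P r γ π' μ - valueV P r γ π μ
      = ∑ s, occ P γ π' μ s * ∑ a, valueQ P r γ π s a * (π' s a - π s a) := by
  set w : S → ℝ := fun s => valueV P r γ π (fun s'' => if s'' = s then 1 else 0) with hw
  have hμ' : ∀ s, μ s = occ P γ π' μ s - γ * markovStep P π' (occ P γ π' μ) s := fun s => by
    linarith [occ_fixed hP hγ hπ' hμ s]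
  -- By the flow equation of the new policy, `V^π = ⟨μ, w⟩ = ⟨D', w⟩ - γ ⟨P^{π'} D', w⟩`.
  have hV : valueV P r γ π μ = ∑ s, occ P γ π' μ s * w s
      - γ * ∑ s, occ P γ π' μ s * ∑ a, π' s a * ∑ s', P s a s' * w s' := by
    rw [← markovStep_pair, Finset.mul_sum, ← Finset.sum_sub_distrib,
      valueV_linear r hP hγ hπ]
    refine Finset.sum_congr rfl fun s _ => ?_
    rw [hμ' s]
    simp only [hw]
    ring
  rw [hV, valueV_eq_occ r hP hγ hπ' hμ, Finset.mul_sum, ← Finset.sum_sub_distrib,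
    ← Finset.sum_sub_distrib]
  refine Finset.sum_congr rfl fun s _ => ?_
  have hb : w s = ∑ a, π s a * valueQ P r γ π s a := bellman r hP hγ hπ s
  have hq : ∑ a, π' s a * valueQ P r γ π s a
      = ∑ a, π' s a * r s a + γ * ∑ a, π' s a * ∑ s', P s a s' * w s' := by
    simp only [valueQ, mul_add, Finset.sum_add_distrib, hw]
    congr 1
    rw [Finset.mul_sum]
    exact Finset.sum_congr rfl fun a _ => by ring
  have hs : ∑ a, valueQ P r γ π s a * (π' s a - π s a)
      = ∑ a, π' s a * valueQ P r γ π s a - ∑ a, π s a * valueQ P r γ π s a := by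
    rw [← Finset.sum_sub_distrib]
    exact Finset.sum_congr rfl fun a _ => by ring
  rw [hs, hq, hb]
  ring

end Smoothness

/-- **Smoothness of the value function (Lemma 5, `lem:smoothness`).**
For any two policies `π` and `π'`,
`|V^{π'} − V^π − (∇_π V^π)ᵀ(π' − π)| ≤ (γ/(1−γ)³)·∥π' − π∥_{∞,1}²`,
i.e. the value function is `2γ/(1−γ)³`-smooth in the `∥·∥_{∞,1}` norm. -/
theorem value_function_smooth {S A : Type*} [Fintype S] [Fintype A] [Nonempty S] [Nonempty A]
    [DecidableEq S] (P : S → A → S → ℝ) (r : S → A → ℝ) (γ : ℝ) (d₀ : S → ℝ)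
    (hP : IsKernel P) (hr : ∀ s a, r s a ∈ Set.Icc (0 : ℝ) 1)
    (hγ : γ ∈ Set.Ico (0 : ℝ) 1) (hd₀ : IsDist d₀)
    (π π' : S → A → ℝ) (hπ : IsPolicy π) (hπ' : IsPolicy π') :
    |valueV P r γ π' d₀ - valueV P r γ π d₀ -
        dotSA (gradV P r γ π d₀) (fun s a => π' s a - π s a)| ≤
      γ / (1 - γ) ^ 3 * (normInfOne (fun s a => π' s a - π s a)) ^ 2 := by
  have h1γ : 0 < 1 - γ := by linarith [hγ.2]
  set N := normInfOne (fun s a => π' s a - π s a) with hNdef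
  have hN : ∀ s, ∑ a, |π' s a - π s a| ≤ N := fun s =>
    le_ciSup (f := fun s => ∑ a, |π' s a - π s a|) (Set.finite_range _).bddAbove s
  have hgrad : dotSA (gradV P r γ π d₀) (fun s a => π' s a - π s a)
      = ∑ s, occ P γ π d₀ s * ∑ a, valueQ P r γ π s a * (π' s a - π s a) := by
    simp only [dotSA, gradV, Finset.mul_sum]
    refine Finset.sum_congr rfl fun s _ => Finset.sum_congr rfl fun a _ => ?_
    have hv : visitDist P γ π d₀ s = (1 - γ) * occ P γ π d₀ s := rfl
    rw [hv]
    field_simp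
  rw [performance_difference r hP hγ hπ hπ' hd₀, hgrad, ← Finset.sum_sub_distrib]
  have hin : ∀ s, |∑ a, valueQ P r γ π s a * (π' s a - π s a)| ≤ N / (1 - γ) := by
    intro s
    calc _ ≤ ∑ a, 1 / (1 - γ) * |π' s a - π s a| := by
          refine (Finset.abs_sum_le_sum_abs _ _).trans (Finset.sum_le_sum fun a _ => ?_)
          rw [abs_mul]
          exact mul_le_mul_of_nonneg_right (valueQ_abs_le hP hr hγ hπ s a) (abs_nonneg _)
      _ ≤ 1 / (1 - γ) * N := by
          rw [← Finset.mul_sum]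
          exact mul_le_mul_of_nonneg_left (hN s) (by positivity)
      _ = N / (1 - γ) := by ring
  have hN0 : 0 ≤ N :=
    (Finset.sum_nonneg fun a _ => abs_nonneg _).trans (hN (Classical.arbitrary S))
  calc _ ≤ ∑ s, |occ P γ π' d₀ s - occ P γ π d₀ s| * (N / (1 - γ)) := by
        refine (Finset.abs_sum_le_sum_abs _ _).trans (Finset.sum_le_sum fun s _ => ?_)
        rw [← sub_mul, abs_mul]
        exact mul_le_mul_of_nonneg_left (hin s) (abs_nonneg _)
    _ = normL1 (fun s => occ P γ π' d₀ s - occ P γ π d₀ s) * (N / (1 - γ)) := by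
        rw [normL1, Finset.sum_mul]
    _ ≤ γ * N / (1 - γ) ^ 2 * (N / (1 - γ)) :=
        mul_le_mul_of_nonneg_right (occ_diff_le hP hγ hπ hπ' hd₀ hN) (by positivity)
    _ = γ / (1 - γ) ^ 3 * N ^ 2 := by
        field_simp
end
end

section
/- For any two policies π and π′, any probability distribution d over S, and any integer t ≥ 0, ∥(P^{π′})^t d − (P^π)^t d∥₁ ≤ t·∥π′ − π∥_{∞,1}, where ∥·∥₁ is the total-variation (ℓ₁) norm on ℝ^S and (P^π)^t denotes the t-fold composition of the Markov operator. -/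
/-!
The proof is by induction on `t`, using the telescoping identity
`P^{π'} u − P^π v = P^{π'} (u − v) + P^{π' − π} v` with `u`, `v` the `t`-step distributions
(`markovStep_sub`). The first term is controlled because the Markov operator of a policy contracts
the `ℓ₁` norm (`normL1_markovStep_le_self`); the second is at most `∥π' − π∥_{∞,1} ∥v∥₁`
(`normL1_markovStep_le_normInfOne`), where `∥v∥₁ ≤ 1`. Each step thus adds at most
`∥π' − π∥_{∞,1}`.
-/

open Finset

noncomputable section

/-- The basic `ℓ₁` estimate, with an arbitrary signed weight `x` in place of a policy: since each `P s a` has total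
mass one, mass is only lost to cancellation. Taking `x` to be a policy or a difference of two
policies gives the two estimates used in the telescoping argument. -/
lemma normL1_markovStep_le {S A : Type*} [Fintype S] [Fintype A] {P : S → A → S → ℝ}
    (hP : IsKernel P) (x : S → A → ℝ) (e : S → ℝ) :
    normL1 (markovStep P x e) ≤ ∑ s, (∑ a, |x s a|) * |e s| := by
  unfold normL1 markovStep
  calc ∑ s', |∑ s, ∑ a, P s a s' * x s a * e s|
      ≤ ∑ s', ∑ s, ∑ a, P s a s' * (|x s a| * |e s|) := by
        refine sum_le_sum fun s' _ => (abs_sum_le_sum_abs _ _).trans ?_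
        refine sum_le_sum fun s _ => (abs_sum_le_sum_abs _ _).trans ?_
        refine sum_le_sum fun a _ => ?_
        rw [abs_mul, abs_mul, abs_of_nonneg (hP.1 s a s'), mul_assoc]
    _ = ∑ s, ∑ a, (∑ s', P s a s') * (|x s a| * |e s|) := by
        rw [sum_comm]
        refine sum_congr rfl fun s _ => ?_
        rw [sum_comm]
        exact sum_congr rfl fun a _ => (sum_mul _ _ _).symm
    _ = ∑ s, (∑ a, |x s a|) * |e s| := by
        simp only [hP.2, one_mul, sum_mul]

lemma normL1_markovStep_le_normInfOne {S A : Type*} [Fintype S] [Fintype A] [Nonempty S]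
    {P : S → A → S → ℝ} (hP : IsKernel P) (x : S → A → ℝ) (e : S → ℝ) :
    normL1 (markovStep P x e) ≤ normInfOne x * normL1 e := by
  refine (normL1_markovStep_le hP x e).trans ?_
  rw [normL1, mul_sum]
  exact sum_le_sum fun s _ => mul_le_mul_of_nonneg_right
    (le_ciSup (f := fun s => ∑ a, |x s a|) (Set.finite_range _).bddAbove s) (abs_nonneg _)

/-- The Markov operator of a policy is an `ℓ₁` contraction on signed vectors. -/
lemma normL1_markovStep_le_self {S A : Type*} [Fintype S] [Fintype A]
    {P : S → A → S → ℝ} (hP : IsKernel P) {π : S → A → ℝ} (hπ : IsPolicy π) (e : S → ℝ) :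
    normL1 (markovStep P π e) ≤ normL1 e := by
  refine (normL1_markovStep_le hP π e).trans_eq (sum_congr rfl fun s _ => ?_)
  simp only [abs_of_nonneg (hπ.1 s _), hπ.2, one_mul]

lemma normL1_iterate_le_one {S A : Type*} [Fintype S] [Fintype A]
    {P : S → A → S → ℝ} (hP : IsKernel P) {π : S → A → ℝ} (hπ : IsPolicy π)
    {d : S → ℝ} (hd : IsDist d) (t : ℕ) :
    normL1 ((markovStep P π)^[t] d) ≤ 1 := by
  induction t with
  | zero => simp [normL1, abs_of_nonneg (hd.1 _), hd.2]
  | succ t ih =>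
    rw [Function.iterate_succ_apply']
    exact (normL1_markovStep_le_self hP hπ _).trans ih

lemma normL1_add_le {S : Type*} [Fintype S] (u v : S → ℝ) :
    normL1 (fun s => u s + v s) ≤ normL1 u + normL1 v := by
  unfold normL1
  rw [← sum_add_distrib]
  exact sum_le_sum fun s _ => abs_add_le _ _

/-- One telescoping step: `P^{π'} u − P^π v = P^{π'} (u − v) + P^{π' − π} v`. -/
lemma markovStep_sub {S A : Type*} [Fintype S] [Fintype A] (P : S → A → S → ℝ)
    (π π' : S → A → ℝ) (u v : S → ℝ) (s : S) :
    markovStep P π' u s - markovStep P π v s =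
      markovStep P π' (fun s => u s - v s) s +
        markovStep P (fun s a => π' s a - π s a) v s := by
  simp only [markovStep, ← sum_sub_distrib, ← sum_add_distrib]
  exact sum_congr rfl fun _ _ => sum_congr rfl fun _ _ => by ring

/-- **`t`-step bound for iterated Markov operators.**
For any two policies `π, π'`, any distribution `d`, and any `t ≥ 0`,
`∥(P^{π'})^t d − (P^π)^t d∥₁ ≤ t·∥π' − π∥_{∞,1}`. -/
theorem markov_operator_iterated {S A : Type*} [Fintype S] [Fintype A] [Nonempty S]
    [Nonempty A] (P : S → A → S → ℝ) (r : S → A → ℝ) (γ : ℝ) (d₀ : S → ℝ)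
    (hP : IsKernel P) (hr : ∀ s a, r s a ∈ Set.Icc (0 : ℝ) 1)
    (hγ : γ ∈ Set.Ico (0 : ℝ) 1) (hd₀ : IsDist d₀)
    (π π' : S → A → ℝ) (hπ : IsPolicy π) (hπ' : IsPolicy π')
    (d : S → ℝ) (hd : IsDist d) (t : ℕ) :
    normL1 (fun s => (markovStep P π')^[t] d s - (markovStep P π)^[t] d s) ≤
      t * normInfOne (fun s a => π' s a - π s a) := by
  have hnn : 0 ≤ normInfOne (fun s a => π' s a - π s a) :=
    Real.iSup_nonneg fun s => sum_nonneg fun a _ => abs_nonneg _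
  induction t with
  | zero => simp [normL1]
  | succ t ih =>
    simp only [Function.iterate_succ_apply', markovStep_sub P π π']
    refine (normL1_add_le _ _).trans ?_
    have h1 := (normL1_markovStep_le_self hP hπ' _).trans ih
    have h2 := (normL1_markovStep_le_normInfOne hP (fun s a => π' s a - π s a)
      ((markovStep P π)^[t] d)).trans
      (mul_le_of_le_one_right hnn (normL1_iterate_le_one hP hπ hd t))
    push_cast
    linarith
end
end

section
/- The extended value function Ṽ_μ is differentiable at every policy π, and its partial derivative with respect to the coordinate W(s,a), evaluated at W = π, equals (1/(1−γ))·d^π_μ(s)·Q^π(s,a) for every s ∈ S and a ∈ A (the policy gradient theorem in tabular form). -/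
/-!
Write `P_W` for `policyMatrix P W`, and `G W = I − γ P_W`. At a policy `π` the matrix `P_π` is
row-stochastic, so `γ P_π` has `ℓ∞`-operator norm at most `γ < 1`; hence `G π` is invertible and
`(G π)⁻¹ = ∑ₜ γᵗ P_πᵗ` (`hasSum_resolvent`). Since the law of `s_t` is `μᵀ P_πᵗ`, pairing this
series with vectors gives `visitDist = (1 − γ) μᵀ (G π)⁻¹` and `valueV ν = νᵀ (G π)⁻¹ r_π`.

Matrix inversion is differentiable at units, with derivative `X ↦ −(G π)⁻¹ X (G π)⁻¹`. The product
rule then yields, in the direction `H`, the derivative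
`μᵀ (G π)⁻¹ (γ P_H V + r_H)` of `Ṽ_μ`, where `V = (G π)⁻¹ r_π` (`hasFDerivAt_tildeV`).
For `H = e_{(s,a)}` the vector `γ P_H V + r_H` is `Q^π(s,a)` times the basis vector `e_s`.
-/

open Finset

noncomputable section

open Matrix in
/-- The extended value function `Ṽ_μ(W) = μᵀ(I − γ P_W)⁻¹ r_W`, where
`P_W(s,s') = ∑_a W(s,a)·P(s'|s,a)` and `r_W(s) = ∑_a W(s,a)·r(s,a)`. -/
def tildeV {S A : Type*} [Fintype S] [Fintype A] [DecidableEq S] (P : S → A → S → ℝ)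
    (r : S → A → ℝ) (γ : ℝ) (μ : S → ℝ) (W : S → A → ℝ) : ℝ :=
  μ ⬝ᵥ (((1 : Matrix S S ℝ) - γ • Matrix.of fun s s' => ∑ a, W s a * P s a s')⁻¹ *ᵥ
    fun s => ∑ a, W s a * r s a)

open Matrix
open scoped Matrix.Norms.Operator

section PolicyGradient

variable {S A : Type*} [Fintype S] [Fintype A]

/-- The matrix `P_W(s,s') = ∑_a W(s,a) P(s'|s,a)`, as a linear function of `W`. -/
def policyMatrix (P : S → A → S → ℝ) : (S → A → ℝ) →ₗ[ℝ] Matrix S S ℝ where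
  toFun W := Matrix.of fun s s' => ∑ a, W s a * P s a s'
  map_add' W W' := by
    ext s s'
    simp [add_mul, Finset.sum_add_distrib]
  map_smul' c W := by
    ext s s'
    simp [mul_assoc, Finset.mul_sum]

/-- The reward vector `r_W(s) = ∑_a W(s,a) r(s,a)`, as a linear function of `W`. -/
def policyReward (r : S → A → ℝ) : (S → A → ℝ) →ₗ[ℝ] (S → ℝ) where
  toFun W := fun s => ∑ a, W s a * r s a
  map_add' W W' := by
    ext s
    simp [add_mul, Finset.sum_add_distrib]
  map_smul' c W := by
    ext s
    simp [mul_assoc, Finset.mul_sum]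

/-- The bilinear map `(N, v) ↦ μᵀ N v`. -/
def pairing (μ : S → ℝ) : Matrix S S ℝ →ₗ[ℝ] (S → ℝ) →ₗ[ℝ] ℝ :=
  LinearMap.mk₂ ℝ (fun N v => μ ⬝ᵥ (N *ᵥ v))
    (fun N N' v => by simp [Matrix.add_mulVec, dotProduct_add])
    (fun c N v => by simp [Matrix.smul_mulVec, dotProduct_smul])
    (fun N v v' => by simp [Matrix.mulVec_add, dotProduct_add])
    (fun c N v => by simp [Matrix.mulVec_smul, dotProduct_smul])

lemma markovStep_iterate [DecidableEq S] (P : S → A → S → ℝ) (π : S → A → ℝ) (ν : S → ℝ) (t : ℕ) :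
    (markovStep P π)^[t] ν = ν ᵥ* policyMatrix P π ^ t := by
  induction t with
  | zero => simp
  | succ t ih =>
    rw [Function.iterate_succ_apply', ih, pow_succ, ← Matrix.vecMul_vecMul]
    ext s'
    simp only [markovStep, policyMatrix, LinearMap.coe_mk, AddHom.coe_mk]
    rw [Matrix.vecMul, dotProduct]
    refine Finset.sum_congr rfl fun s _ => ?_
    rw [Matrix.of_apply, Finset.mul_sum]
    exact Finset.sum_congr rfl fun a _ => by ring

/-- A row-stochastic matrix has `ℓ∞`-operator norm at most one. -/
lemma norm_policyMatrix_le {P : S → A → S → ℝ} {π : S → A → ℝ}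
    (hP : IsKernel P) (hπ : IsPolicy π) : ‖policyMatrix P π‖ ≤ 1 := by
  rw [Matrix.linfty_opNorm_def]
  have h : ∀ s, ∑ s', ‖policyMatrix P π s s'‖₊ = 1 := by
    intro s
    apply NNReal.eq
    push_cast
    have h1 : ∀ s', ‖policyMatrix P π s s'‖ = ∑ a, π s a * P s a s' := fun s' =>
      Real.norm_of_nonneg (Finset.sum_nonneg fun a _ => mul_nonneg (hπ.1 s a) (hP.1 s a s'))
    simp_rw [h1]
    rw [Finset.sum_comm]
    simp_rw [← Finset.mul_sum, hP.2, mul_one, hπ.2]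
  have h2 : (Finset.univ.sup fun s => ∑ s', ‖policyMatrix P π s s'‖₊) ≤ 1 :=
    Finset.sup_le fun s _ => (h s).le
  exact_mod_cast h2

variable [DecidableEq S]

/-- The resolvent `(I − γ P_W)⁻¹`. -/
def policyResolvent (P : S → A → S → ℝ) (γ : ℝ) (W : S → A → ℝ) : Matrix S S ℝ :=
  (1 - γ • policyMatrix P W)⁻¹

lemma norm_smul_policyMatrix_lt {P : S → A → S → ℝ} {π : S → A → ℝ} {γ : ℝ}
    (hP : IsKernel P) (hπ : IsPolicy π) (hγ : γ ∈ Set.Ico (0 : ℝ) 1) :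
    ‖γ • policyMatrix P π‖ < 1 := by
  rw [norm_smul, Real.norm_of_nonneg hγ.1]
  have := norm_policyMatrix_le hP hπ
  nlinarith [hγ.1, hγ.2]

/-- The Neumann series of the resolvent, paired with a start vector and a reward vector. -/
lemma hasSum_resolvent {P : S → A → S → ℝ} {π : S → A → ℝ} {γ : ℝ}
    (hP : IsKernel P) (hπ : IsPolicy π) (hγ : γ ∈ Set.Ico (0 : ℝ) 1) (ν v : S → ℝ) :
    HasSum (fun t : ℕ => γ ^ t * (((markovStep P π)^[t] ν) ⬝ᵥ v))
      (ν ⬝ᵥ (policyResolvent P γ π *ᵥ v)) := by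
  have h := hasSum_geom_series_inverse _ (norm_smul_policyMatrix_lt hP hπ hγ)
  rw [← Matrix.nonsing_inv_eq_ringInverse] at h
  have h2 := h.mapL (LinearMap.toContinuousLinearMap ((pairing ν).flip v))
  convert! h2 using 1
  ext t
  change _ = ν ⬝ᵥ ((γ • policyMatrix P π) ^ t *ᵥ v)
  rw [markovStep_iterate, smul_pow, Matrix.smul_mulVec, dotProduct_smul, smul_eq_mul,
    Matrix.dotProduct_mulVec]

lemma valueV_eq {P : S → A → S → ℝ} {π : S → A → ℝ} {γ : ℝ}
    (hP : IsKernel P) (hπ : IsPolicy π) (hγ : γ ∈ Set.Ico (0 : ℝ) 1) (r : S → A → ℝ)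
    (ν : S → ℝ) :
    valueV P r γ π ν = ν ⬝ᵥ (policyResolvent P γ π *ᵥ policyReward r π) :=
  (hasSum_resolvent hP hπ hγ ν (policyReward r π)).tsum_eq

lemma visitDist_eq {P : S → A → S → ℝ} {π : S → A → ℝ} {γ : ℝ}
    (hP : IsKernel P) (hπ : IsPolicy π) (hγ : γ ∈ Set.Ico (0 : ℝ) 1) (μ : S → ℝ) (s : S) :
    visitDist P γ π μ s = (1 - γ) * (μ ᵥ* policyResolvent P γ π) s := by
  have h := hasSum_resolvent hP hπ hγ μ (Pi.single s 1)
  simp only [dotProduct_single, mul_one, Matrix.dotProduct_mulVec] at h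
  rw [visitDist, h.tsum_eq]

lemma valueQ_eq {P : S → A → S → ℝ} {π : S → A → ℝ} {γ : ℝ}
    (hP : IsKernel P) (hπ : IsPolicy π) (hγ : γ ∈ Set.Ico (0 : ℝ) 1) (r : S → A → ℝ)
    (s : S) (a : A) :
    valueQ P r γ π s a = r s a + γ * (P s a ⬝ᵥ (policyResolvent P γ π *ᵥ policyReward r π)) := by
  rw [valueQ, dotProduct]
  simp_rw [valueV_eq hP hπ hγ r]
  simp [dotProduct]

/-- The derivative of `Ṽ_μ` at `π` in the direction `H` is `μᵀ N (γ P_H N r_π + r_H)` with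
`N = (I − γ P_π)⁻¹`. -/
lemma hasFDerivAt_tildeV {P : S → A → S → ℝ} {π : S → A → ℝ} {γ : ℝ}
    (hP : IsKernel P) (hπ : IsPolicy π) (hγ : γ ∈ Set.Ico (0 : ℝ) 1) (r : S → A → ℝ)
    (μ : S → ℝ) :
    ∃ D : (S → A → ℝ) →L[ℝ] ℝ, HasFDerivAt (tildeV P r γ μ) D π ∧
      ∀ H, D H = (μ ᵥ* policyResolvent P γ π) ⬝ᵥ
        (γ • (policyMatrix P H *ᵥ (policyResolvent P γ π *ᵥ policyReward r π)) + policyReward r H) := by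
  have hlt := norm_smul_policyMatrix_lt hP hπ hγ
  have hinv : (↑(Units.oneSub _ hlt)⁻¹ : Matrix S S ℝ) = policyResolvent P γ π := by
    rw [policyResolvent, Matrix.nonsing_inv_eq_ringInverse, NormedRing.inverse_one_sub _ hlt]
  have hG : HasFDerivAt (fun W => 1 - γ • policyMatrix P W)
      (-(γ • LinearMap.toContinuousLinearMap (policyMatrix P))) π :=
    (((LinearMap.toContinuousLinearMap (policyMatrix P)).hasFDerivAt (x := π)).const_smul γ).const_sub
      1
  have hN := HasFDerivAt.comp π (hasFDerivAt_ringInverse (𝕜 := ℝ) (Units.oneSub _ hlt)) hG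
  have hR := (LinearMap.toContinuousLinearMap (policyReward r)).hasFDerivAt (x := π)
  have hB := (LinearMap.toContinuousBilinearMap (pairing μ)).hasFDerivAt_of_bilinear hN hR
  refine ⟨_, hB.congr_of_eventuallyEq (Filter.Eventually.of_forall fun W => ?_), fun H => ?_⟩
  · change _ = μ ⬝ᵥ (Ring.inverse (1 - γ • policyMatrix P W) *ᵥ policyReward r W)
    rw [← Matrix.nonsing_inv_eq_ringInverse]
    rfl
  · have hval : Ring.inverse (1 - γ • policyMatrix P π) = policyResolvent P γ π :=
      (Matrix.nonsing_inv_eq_ringInverse _).symm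
    -- The product rule with the derivative of inversion, unfolded at `H`.
    change μ ⬝ᵥ (Ring.inverse (1 - γ • policyMatrix P π) *ᵥ policyReward r H) +
      μ ⬝ᵥ ((-((↑(Units.oneSub _ hlt)⁻¹ : Matrix S S ℝ) * (-(γ • policyMatrix P H)) *
        (↑(Units.oneSub _ hlt)⁻¹ : Matrix S S ℝ))) *ᵥ policyReward r π) = _
    rw [hval, hinv]
    simp only [mul_neg, neg_mul, neg_neg, Matrix.mul_smul, Matrix.smul_mul, dotProduct_add,
      dotProduct_smul, Matrix.smul_mulVec, ← Matrix.mulVec_mulVec, Matrix.dotProduct_mulVec]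
    ring

end PolicyGradient

/-- **Policy gradient theorem (tabular form).**
The extended value function `Ṽ_μ` is differentiable at every policy `π`, and its partial
derivative with respect to the coordinate `W(s,a)`, evaluated at `W = π`, equals
`(1/(1−γ))·d^π_μ(s)·Q^π(s,a)`. -/
theorem policy_gradient_theorem {S A : Type*} [Fintype S] [Fintype A] [Nonempty S]
    [Nonempty A] [DecidableEq S] [DecidableEq A]
    (P : S → A → S → ℝ) (r : S → A → ℝ) (γ : ℝ) (d₀ : S → ℝ)
    (hP : IsKernel P) (hr : ∀ s a, r s a ∈ Set.Icc (0 : ℝ) 1)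
    (hγ : γ ∈ Set.Ico (0 : ℝ) 1) (hd₀ : IsDist d₀)
    (μ : S → ℝ) (hμ : IsDist μ)
    (π : S → A → ℝ) (hπ : IsPolicy π) :
    DifferentiableAt ℝ (tildeV P r γ μ) π ∧
      ∀ s a, fderiv ℝ (tildeV P r γ μ) π (Pi.single s (Pi.single a 1)) =
        (1 / (1 - γ)) * visitDist P γ π μ s * valueQ P r γ π s a := by
  obtain ⟨D, hD, hDH⟩ := hasFDerivAt_tildeV hP hπ hγ r μ
  refine ⟨hD.differentiableAt, fun s a => ?_⟩
  have h1 : (1 : ℝ) - γ ≠ 0 := by linarith [hγ.2]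
  rw [hD.fderiv, hDH, visitDist_eq hP hπ hγ, valueQ_eq hP hπ hγ]
  -- Both `P_H V` and `r_H` are supported on the single coordinate `s` when `H = e_{(s,a)}`.
  have hvec : γ • (policyMatrix P (Pi.single s (Pi.single a 1)) *ᵥ
        (policyResolvent P γ π *ᵥ policyReward r π)) + policyReward r (Pi.single s (Pi.single a 1)) =
      Pi.single s (r s a + γ * (P s a ⬝ᵥ (policyResolvent P γ π *ᵥ policyReward r π))) := by
    generalize policyResolvent P γ π *ᵥ policyReward r π = V
    ext i
    by_cases hi : i = s
    · subst hi
      simp [policyMatrix, policyReward, Matrix.mulVec, dotProduct, Pi.single_apply, add_comm]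
    · simp [policyMatrix, policyReward, Matrix.mulVec, dotProduct, hi]
  rw [hvec, dotProduct_single]
  field_simp
end
end
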